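/- A priori L^p vorticity estimate for the forced transport equation. Let T > 0 and 2 ≤ p < ∞. Let u : [0,T) × ℝ² → ℝ² be continuously differentiable and divergence-free with sup_{t∈[0,T)} ‖u(t)‖_{L²(ℝ²)} < ∞; let ω : [0,T) × ℝ² → ℝ be continuously differentiable with sup_{t∈[0,T)} (‖ω(t)‖_{L²(ℝ²)} + ‖ω(t)‖_{L^∞(ℝ²)}) < ∞; let j : [0,T) × ℝ² → ℝ² and b : [0,T) × ℝ² → ℝ be measurable with ‖j‖_{L²([0,t); L^p(ℝ²))} < ∞ and ‖∇b‖_{L²([0,t); L^∞(ℝ²))} < ∞ for all t < T, where b is differentiable in x. Assume the transport equation ∂_t ω + u·∇ω = −j·∇b holds pointwise on [0,T) × ℝ². Then for every t ∈ (0,T): ‖ω(t)‖_{L^p(ℝ²)} ≤ ‖ω(0)‖_{L^p(ℝ²)} + ‖j‖_{L²([0,t); L^p(ℝ²))} · ‖∇b‖_{L²([0,t); L^∞(ℝ²))}. -/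

import Mathlib

open MeasureTheory Set
open scoped ENNReal

/-- Mixed time-Lebesgue norm `‖F‖_{L²([0,t))}` of an `ℝ≥0∞`-valued quantity. -/
noncomputable def timeL2 (t : ℝ) (F : ℝ → ℝ≥0∞) : ℝ≥0∞ :=
  (∫⁻ s in Set.Ico (0:ℝ) t, F s ^ (2:ℝ)) ^ ((1:ℝ) / 2)

open Filter
open scoped Topology

/-!
Multiply `ω` by a cutoff `ψ` and differentiate `∫ |ψω|^p`. Since `u` is divergence-free, only the
material derivative of `|ψω|^p` contributes: Hölder's inequality bounds the part coming from the
source by `p ‖ψω‖^(p-1) ‖ψ(∂ₜω + u·∇ω)‖`, and the flux `∫ |ω|^p |u·∇ψ|` is at most a constant times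
`sup |∇ψ|`, because `ω` is bounded and both `ω` and `u` are square integrable. A Grönwall argument
for `‖ψω‖^p` turns this into a bound for `‖ψω(t)‖`, and as `ψ → 1` slowly the flux disappears and
Fatou's lemma gives `‖ω(t)‖ ≤ ‖ω(0)‖ + ∫₀ᵗ ‖∂ₜω + u·∇ω‖`. The equation and Hölder's inequality in
time finish the proof.
-/

/-! ### Calculus in space-time -/

theorem continuous_slice {X Y Z : Type*} [TopologicalSpace X] [TopologicalSpace Y]
    [TopologicalSpace Z] {f : X → Y → Z} {S : Set X} {s : X}
    (hf : ContinuousOn (Function.uncurry f) (S ×ˢ univ)) (hs : s ∈ S) : Continuous (f s) :=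
  hf.comp_continuous (f := fun y => (s, y)) (by fun_prop) fun y => ⟨hs, mem_univ y⟩

section MaterialDerivative

variable {E F : Type*} [NormedAddCommGroup E] [NormedSpace ℝ E] [NormedAddCommGroup F]
  [NormedSpace ℝ F] {I : Set ℝ} {u : ℝ → E → E} {f : ℝ → E → F} {s : ℝ}

theorem contDiff_slice {n : WithTop ℕ∞} (hf : ContDiffOn ℝ n (Function.uncurry f) (I ×ˢ univ))
    (hs : s ∈ I) : ContDiff ℝ n (f s) :=
  hf.comp_contDiff (f := fun x => (s, x)) (by fun_prop) fun x => ⟨hs, mem_univ x⟩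

/-- The material derivative `∂ₜf + u·∇f` of a time-dependent field `f` on `I × E` along a velocity
field `u`, encoded as the space-time derivative of `f` in the direction `(1, u)`; at the endpoints
of `I` the time derivative is one-sided. -/
noncomputable def materialDeriv (I : Set ℝ) (u : ℝ → E → E) (f : ℝ → E → F) (s : ℝ) (x : E) : F :=
  fderivWithin ℝ (Function.uncurry f) (I ×ˢ univ) (s, x) (1, u s x)

theorem hasFDerivWithinAt_uncurry (hf : ContDiffOn ℝ 1 (Function.uncurry f) (I ×ˢ univ))
    (hs : s ∈ I) (x : E) :
    HasFDerivWithinAt (Function.uncurry f)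
      (fderivWithin ℝ (Function.uncurry f) (I ×ˢ univ) (s, x)) (I ×ˢ univ) (s, x) :=
  (hf.differentiableOn one_ne_zero (s, x) ⟨hs, mem_univ x⟩).hasFDerivWithinAt

theorem uniqueDiffWithinAt_prod_univ (hI : UniqueDiffOn ℝ I) (hs : s ∈ I) (x : E) :
    UniqueDiffWithinAt ℝ (I ×ˢ (univ : Set E)) (s, x) :=
  hI.prod uniqueDiffOn_univ (s, x) ⟨hs, mem_univ x⟩

theorem hasFDerivAt_slice (hf : ContDiffOn ℝ 1 (Function.uncurry f) (I ×ˢ univ)) (hs : s ∈ I)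
    (x : E) :
    HasFDerivAt (f s) ((fderivWithin ℝ (Function.uncurry f) (I ×ˢ univ) (s, x)).comp
      (ContinuousLinearMap.inr ℝ ℝ E)) x :=
  ((hasFDerivWithinAt_uncurry hf hs x).comp x (hasFDerivAt_prodMk_right s x).hasFDerivWithinAt
    fun y _ => ⟨hs, mem_univ y⟩).hasFDerivAt univ_mem

theorem hasDerivAt_slice (hf : ContDiffOn ℝ 1 (Function.uncurry f) (I ×ˢ univ)) (hs : I ∈ 𝓝 s)
    (x : E) :
    HasDerivAt (fun s => f s x)
      (fderivWithin ℝ (Function.uncurry f) (I ×ˢ univ) (s, x) (1, 0)) s :=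
  HasFDerivAt.comp_hasDerivAt (f := fun s => (s, x)) s
    ((hasFDerivWithinAt_uncurry hf (mem_of_mem_nhds hs) x).hasFDerivAt
      (prod_mem_nhds hs univ_mem)) ((hasDerivAt_id' s).prodMk (hasDerivAt_const s x))

theorem materialDeriv_eq_add (hf : ContDiffOn ℝ 1 (Function.uncurry f) (I ×ˢ univ)) (hs : s ∈ I)
    (x : E) :
    materialDeriv I u f s x =
      fderivWithin ℝ (Function.uncurry f) (I ×ˢ univ) (s, x) (1, 0) + fderiv ℝ (f s) x (u s x) := by
  rw [materialDeriv, (hasFDerivAt_slice hf hs x).fderiv, ContinuousLinearMap.comp_apply,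
    ContinuousLinearMap.inr_apply, ← map_add, Prod.mk_add_mk, add_zero, zero_add]

theorem continuousOn_fderivWithin_apply_timeDirection (hI : UniqueDiffOn ℝ I)
    (hf : ContDiffOn ℝ 1 (Function.uncurry f) (I ×ˢ univ)) :
    ContinuousOn (fun z : ℝ × E => fderivWithin ℝ (Function.uncurry f) (I ×ˢ univ) z (1, 0))
      (I ×ˢ univ) :=
  (hf.continuousOn_fderivWithin (hI.prod uniqueDiffOn_univ) le_rfl).clm_apply continuousOn_const

theorem continuousOn_materialDeriv (hI : UniqueDiffOn ℝ I)
    (hu : ContinuousOn (Function.uncurry u) (I ×ˢ univ))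
    (hf : ContDiffOn ℝ 1 (Function.uncurry f) (I ×ˢ univ)) :
    ContinuousOn (Function.uncurry (materialDeriv I u f)) (I ×ˢ univ) :=
  (hf.continuousOn_fderivWithin (hI.prod uniqueDiffOn_univ) le_rfl).clm_apply
    (continuousOn_const.prodMk hu)

theorem materialDeriv_comp {ω : ℝ → E → ℝ} {g : ℝ → ℝ} {g' : ℝ} (hI : UniqueDiffOn ℝ I)
    (hω : ContDiffOn ℝ 1 (Function.uncurry ω) (I ×ˢ univ)) (hs : s ∈ I) {x : E}
    (hg : HasDerivAt g g' (ω s x)) :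
    materialDeriv I u (fun s x => g (ω s x)) s x = g' * materialDeriv I u ω s x := by
  have h := hg.comp_hasFDerivWithinAt (s, x) (hasFDerivWithinAt_uncurry hω hs x)
  exact congrArg (· (1, u s x)) (h.fderivWithin (uniqueDiffWithinAt_prod_univ hI hs x))

theorem materialDeriv_spatial_mul {ω : ℝ → E → ℝ} {ψ : E → ℝ} (hI : UniqueDiffOn ℝ I)
    (hω : ContDiffOn ℝ 1 (Function.uncurry ω) (I ×ˢ univ)) (hs : s ∈ I) {x : E}
    (hψ : DifferentiableAt ℝ ψ x) :
    materialDeriv I u (fun s x => ψ x * ω s x) s x =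
      ψ x * materialDeriv I u ω s x + ω s x * fderiv ℝ ψ x (u s x) := by
  have hψ' : HasFDerivWithinAt (fun z : ℝ × E => ψ z.2)
      ((fderiv ℝ ψ x).comp (.snd ℝ ℝ E)) (I ×ˢ univ) (s, x) :=
    (HasFDerivAt.comp (s, x) (g := ψ) hψ.hasFDerivAt hasFDerivAt_snd).hasFDerivWithinAt
  exact congrArg (· (1, u s x)) ((hψ'.mul (hasFDerivWithinAt_uncurry hω hs x)).fderivWithin
    (uniqueDiffWithinAt_prod_univ hI hs x))

end MaterialDerivative

/-! ### Divergence-free fields and the transport of integrals -/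

theorem hasDerivAt_integral_of_compact_support {X : Type*} [TopologicalSpace X]
    [MeasurableSpace X] [OpensMeasurableSpace X] [T2Space X] {μ : Measure X}
    [IsFiniteMeasureOnCompacts μ] {f f' : ℝ → X → ℝ} {U : Set ℝ} {K : Set X} {s : ℝ}
    (hU : IsOpen U) (hs : s ∈ U) (hK : IsCompact K)
    (hf : ∀ τ ∈ U, Continuous (f τ)) (hfK : ∀ τ ∈ U, ∀ x ∉ K, f τ x = 0)
    (hf' : ContinuousOn (Function.uncurry f') (U ×ˢ univ))
    (hderiv : ∀ τ ∈ U, ∀ x, HasDerivAt (fun τ => f τ x) (f' τ x) τ) :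
    Integrable (f' s) μ ∧ HasDerivAt (fun τ => ∫ x, f τ x ∂μ) (∫ x, f' s x ∂μ) s := by
  obtain ⟨L, hLs, hLU, hL⟩ := local_compact_nhds (hU.mem_nhds hs)
  obtain ⟨C, hC⟩ := (hL.prod hK).exists_bound_of_continuousOn
    (hf'.mono (prod_mono hLU (subset_univ K)))
  have hf'K : ∀ τ ∈ U, ∀ x ∉ K, f' τ x = 0 := fun τ hτ x hx =>
    (hderiv τ hτ x).unique ((hasDerivAt_const τ 0).congr_of_eventuallyEq
      (eventually_of_mem (hU.mem_nhds hτ) fun σ hσ => hfK σ hσ x hx))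
  have hfint : ∀ τ ∈ U, Integrable (f τ) μ := fun τ hτ =>
    (hf τ hτ).integrable_of_hasCompactSupport (.intro hK (hfK τ hτ))
  have hf'int : Integrable (f' s) μ :=
    (continuous_slice hf' hs).integrable_of_hasCompactSupport (.intro hK (hf'K s hs))
  have hbound : ∀ x, ∀ τ ∈ L, ‖f' τ x‖ ≤ K.indicator (fun _ => C) x := by
    intro x τ hτ
    by_cases hx : x ∈ K
    · rw [indicator_of_mem hx]
      exact hC (τ, x) ⟨hτ, hx⟩
    · simp [hx, hf'K τ (hLU hτ) x hx]
  exact hasDerivAt_integral_of_dominated_loc_of_deriv_le hLs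
    (eventually_of_mem (hU.mem_nhds hs) fun τ hτ => (hfint τ hτ).aestronglyMeasurable)
    (hfint s hs) hf'int.aestronglyMeasurable (.of_forall hbound)
    ((integrable_indicator_iff hK.measurableSet).2 (integrableOn_const hK.measure_lt_top.ne))
    (.of_forall fun x τ hτ => hderiv τ (hLU hτ) x)

section Divergence

variable {E : Type*} [NormedAddCommGroup E] [NormedSpace ℝ E]

/-- The divergence of a vector field, as the trace of its derivative. -/
noncomputable def divergence (v : E → E) (x : E) : ℝ :=
  LinearMap.trace ℝ E (fderiv ℝ v x)

theorem divergence_eq_sum_basis {ι : Type*} [Fintype ι] (e : Module.Basis ι ℝ E) (v : E → E)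
    (x : E) : divergence v x = ∑ i, e.repr (fderiv ℝ v x (e i)) i := by
  classical
  simp [divergence, LinearMap.trace_eq_matrix_trace ℝ e, Matrix.trace, LinearMap.toMatrix_apply]

theorem divergence_euclideanSpace {ι : Type*} [Fintype ι] [DecidableEq ι]
    {v : EuclideanSpace ℝ ι → EuclideanSpace ℝ ι} {x : EuclideanSpace ℝ ι}
    (hv : DifferentiableAt ℝ v x) :
    divergence v x = ∑ i, fderiv ℝ (fun y => v y i) x (EuclideanSpace.single i 1) := by
  rw [divergence_eq_sum_basis (EuclideanSpace.basisFun ι ℝ).toBasis]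
  refine Finset.sum_congr rfl fun i _ => ?_
  have h : HasFDerivAt (fun y => v y i) ((EuclideanSpace.proj i).comp (fderiv ℝ v x)) x :=
    (EuclideanSpace.proj (𝕜 := ℝ) i).hasFDerivAt.comp x hv.hasFDerivAt
  simp [h.fderiv]

variable [FiniteDimensional ℝ E] [MeasurableSpace E] [BorelSpace E] {μ : Measure E}
  [μ.IsAddHaarMeasure]

theorem integral_mul_fderiv_eq_neg_of_hasCompactSupport {c W : E → ℝ} (hc : ContDiff ℝ 1 c)
    (hW : ContDiff ℝ 1 W) (hsupp : HasCompactSupport W) (a : E) :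
    Integrable (fun x => c x * fderiv ℝ W x a) μ ∧
      Integrable (fun x => fderiv ℝ c x a * W x) μ ∧
      ∫ x, c x * fderiv ℝ W x a ∂μ = -∫ x, fderiv ℝ c x a * W x ∂μ := by
  have hi₁ : Integrable (fun x => c x * fderiv ℝ W x a) μ :=
    (hc.continuous.mul ((hW.continuous_fderiv one_ne_zero).clm_apply
      continuous_const)).integrable_of_hasCompactSupport (hsupp.fderiv_apply ℝ a).mul_left
  have hi₂ : Integrable (fun x => fderiv ℝ c x a * W x) μ :=
    (((hc.continuous_fderiv one_ne_zero).clm_apply continuous_const).mul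
      hW.continuous).integrable_of_hasCompactSupport hsupp.mul_left
  exact ⟨hi₁, hi₂, integral_mul_fderiv_eq_neg_fderiv_mul_of_integrable hi₂ hi₁
    ((hc.continuous.mul hW.continuous).integrable_of_hasCompactSupport hsupp.mul_left)
    (fun x _ => hc.differentiable one_ne_zero x) (fun x _ => hW.differentiable one_ne_zero x)⟩

theorem integral_fderiv_apply_eq_neg_integral_mul_divergence {W : E → ℝ} {v : E → E}
    (hW : ContDiff ℝ 1 W) (hsupp : HasCompactSupport W) (hv : ContDiff ℝ 1 v) :
    ∫ x, fderiv ℝ W x (v x) ∂μ = -∫ x, W x * divergence v x ∂μ := by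
  let e := Module.finBasis ℝ E
  let c i : E →L[ℝ] ℝ := LinearMap.toContinuousLinearMap (e.coord i)
  have hcv i : ContDiff ℝ 1 fun x => c i (v x) := (c i).contDiff.comp hv
  have hfderiv_cv i x : fderiv ℝ (fun x => c i (v x)) x = (c i).comp (fderiv ℝ v x) :=
    ((c i).hasFDerivAt.comp x (hv.differentiable one_ne_zero x).hasFDerivAt).fderiv
  have hparts i := integral_mul_fderiv_eq_neg_of_hasCompactSupport (μ := μ) (hcv i) hW hsupp (e i)
  have hsum x : fderiv ℝ W x (v x) = ∑ i, c i (v x) * fderiv ℝ W x (e i) := by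
    conv_lhs => rw [← e.sum_repr (v x), map_sum]
    simp [c]
  have hdiv x : ∑ i, fderiv ℝ (fun x => c i (v x)) x (e i) * W x = W x * divergence v x := by
    rw [← Finset.sum_mul, divergence_eq_sum_basis e, mul_comm (W x)]
    simp_rw [hfderiv_cv]
    rfl
  calc ∫ x, fderiv ℝ W x (v x) ∂μ = ∑ i, ∫ x, c i (v x) * fderiv ℝ W x (e i) ∂μ := by
        simp_rw [hsum, integral_finsetSum _ fun i _ => (hparts i).1]
    _ = -∑ i, ∫ x, fderiv ℝ (fun x => c i (v x)) x (e i) * W x ∂μ := by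
        simp_rw [(hparts _).2.2, Finset.sum_neg_distrib]
    _ = -∫ x, W x * divergence v x ∂μ := by
        rw [← integral_finsetSum _ fun i _ => (hparts i).2.1]
        simp_rw [hdiv]

-- A divergence-free field preserves `μ`, so only the material derivative contributes.
theorem hasDerivAt_integral_materialDeriv {I : Set ℝ} {u : ℝ → E → E} {W : ℝ → E → ℝ} {K : Set E}
    {s : ℝ} (hI : UniqueDiffOn ℝ I) (hs : I ∈ 𝓝 s) (hus : ContDiff ℝ 1 (u s))
    (hdiv : ∀ x, divergence (u s) x = 0)
    (hW : ContDiffOn ℝ 1 (Function.uncurry W) (I ×ˢ univ)) (hK : IsCompact K)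
    (hWK : ∀ τ ∈ I, ∀ x ∉ K, W τ x = 0) :
    HasDerivAt (fun τ => ∫ x, W τ x ∂μ) (∫ x, materialDeriv I u W s x ∂μ) s := by
  have hsI := mem_of_mem_nhds hs
  have hWs := contDiff_slice hW hsI
  have hsupp : HasCompactSupport (W s) := .intro hK (hWK s hsI)
  obtain ⟨hint, hderiv⟩ := hasDerivAt_integral_of_compact_support (μ := μ) (f := W)
    (f' := fun τ x => fderivWithin ℝ (Function.uncurry W) (I ×ˢ univ) (τ, x) (1, 0))
    isOpen_interior (mem_interior_iff_mem_nhds.2 hs) hK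
    (fun τ hτ => (contDiff_slice hW (interior_subset hτ)).continuous)
    (fun τ hτ => hWK τ (interior_subset hτ))
    ((continuousOn_fderivWithin_apply_timeDirection hI hW).mono
      (prod_mono interior_subset subset_rfl))
    (fun τ hτ => hasDerivAt_slice hW (mem_interior_iff_mem_nhds.1 hτ))
  have hint' : Integrable (fun x => fderiv ℝ (W s) x (u s x)) μ :=
    ((hWs.continuous_fderiv one_ne_zero).clm_apply hus.continuous).integrable_of_hasCompactSupport
      ((hsupp.fderiv ℝ).mono' fun x hx => subset_tsupport _ fun h => hx (by simp [h]))
  convert hderiv using 1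
  simp_rw [materialDeriv_eq_add hW hsI]
  rw [integral_add hint hint', integral_fderiv_apply_eq_neg_integral_mul_divergence hWs hsupp hus]
  simp [hdiv]

end Divergence

/-! ### Lebesgue norms -/

section Hoelder

variable {α F G : Type*} [MeasurableSpace α] {μ : Measure α} [NormedAddCommGroup F]
  [NormedAddCommGroup G] {f : α → F} {g : α → G} {p : ℝ≥0∞}

theorem lpNorm_rpow_toReal (hp₀ : p ≠ 0) (hp : p ≠ ∞) (hf : AEStronglyMeasurable f μ) :
    lpNorm f p μ ^ p.toReal = ∫ x, ‖f x‖ ^ p.toReal ∂μ := by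
  rw [lpNorm_eq_integral_norm_rpow_toReal hp₀ hp hf,
    Real.rpow_inv_rpow (by positivity) (ENNReal.toReal_pos hp₀ hp).ne']

theorem integral_norm_rpow_sub_one_mul_norm_le (hp₁ : 1 < p) (hp : p ≠ ∞) (hf : MemLp f p μ)
    (hg : MemLp g p μ) :
    ∫ x, ‖f x‖ ^ (p.toReal - 1) * ‖g x‖ ∂μ ≤ lpNorm f p μ ^ (p.toReal - 1) * lpNorm g p μ := by
  have hp₀ : p ≠ 0 := (zero_lt_one.trans hp₁).ne'
  have hq : 1 < p.toReal := by simpa using ENNReal.toReal_strict_mono hp hp₁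
  have hconj := (Real.HolderConjugate.conjExponent hq).symm
  have hmul : (p.toReal - 1) * p.toReal.conjExponent = p.toReal := by
    rw [Real.conjExponent, mul_div_cancel₀ _ (by linarith)]
  have hpow x : ‖‖f x‖ ^ (p.toReal - 1)‖ ^ p.toReal.conjExponent = ‖f x‖ ^ p.toReal := by
    rw [Real.norm_of_nonneg (by positivity), ← Real.rpow_mul (norm_nonneg _), hmul]
  have hf' : MemLp (fun x => ‖f x‖ ^ (p.toReal - 1)) (.ofReal p.toReal.conjExponent) μ := by
    rw [← integrable_norm_rpow_iff (hf.1.norm.aemeasurable.pow_const _).aestronglyMeasurable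
      (by simpa using hconj.pos) ENNReal.ofReal_ne_top, ENNReal.toReal_ofReal hconj.nonneg]
    simpa only [hpow] using hf.integrable_norm_rpow hp₀ hp
  have key := integral_mul_norm_le_Lp_mul_Lq hconj hf'
    (g := fun x => ‖g x‖) (by simpa [ENNReal.ofReal_toReal hp] using hg.norm)
  simp only [hpow, norm_norm, one_div] at key
  rw [← lpNorm_eq_integral_norm_rpow_toReal hp₀ hp hg.1, ← lpNorm_rpow_toReal hp₀ hp hf.1] at key
  calc ∫ x, ‖f x‖ ^ (p.toReal - 1) * ‖g x‖ ∂μ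
      = ∫ x, ‖‖f x‖ ^ (p.toReal - 1)‖ * ‖g x‖ ∂μ := by
        simp_rw [Real.norm_of_nonneg (Real.rpow_nonneg (norm_nonneg (f _)) _)]
    _ ≤ _ := key
    _ = lpNorm f p μ ^ (p.toReal - 1) * lpNorm g p μ := by
        rw [← Real.rpow_mul lpNorm_nonneg, eq_sub_of_add_eq hconj.inv_add_inv_eq_one, mul_sub,
          mul_one, mul_inv_cancel₀ (by linarith)]

theorem lintegral_enorm_rpow_mul_enorm_le {r r' : ℝ≥0∞} [r.HolderConjugate r'] {q : ℝ}
    (hq : 1 ≤ q) (hf : AEStronglyMeasurable f μ) (hg : AEStronglyMeasurable g μ) :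
    ∫⁻ x, ‖f x‖ₑ ^ q * ‖g x‖ₑ ∂μ ≤
      eLpNorm f ∞ μ ^ (q - 1) * (eLpNorm f r μ * eLpNorm g r' μ) := by
  have hfg : ∫⁻ x, ‖f x‖ₑ * ‖g x‖ₑ ∂μ ≤ eLpNorm f r μ * eLpNorm g r' μ := by
    simpa [eLpNorm_one_eq_lintegral_enorm, enorm_mul] using
      eLpNorm_le_eLpNorm_mul_eLpNorm'_of_norm (p := r) (q := r') (r := 1) hf hg
        (fun a b => ‖a‖ * ‖b‖) 1 (.of_forall fun x => by simp)
  have hpow x : ‖f x‖ₑ ^ q = ‖f x‖ₑ ^ (q - 1) * ‖f x‖ₑ := by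
    simpa using ENNReal.rpow_add_of_nonneg (x := ‖f x‖ₑ) (q - 1) 1 (by linarith) zero_le_one
  calc ∫⁻ x, ‖f x‖ₑ ^ q * ‖g x‖ₑ ∂μ
      ≤ ∫⁻ x, eLpNorm f ∞ μ ^ (q - 1) * (‖f x‖ₑ * ‖g x‖ₑ) ∂μ := by
        refine lintegral_mono_ae ?_
        filter_upwards [ae_le_eLpNormEssSup (f := f) (μ := μ)] with x hx
        rw [hpow, mul_assoc, eLpNorm_exponent_top]
        gcongr
    _ = eLpNorm f ∞ μ ^ (q - 1) * ∫⁻ x, ‖f x‖ₑ * ‖g x‖ₑ ∂μ :=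
        lintegral_const_mul'' _ (hf.enorm.mul hg.enorm)
    _ ≤ _ := by gcongr

theorem aemeasurable_eLpNorm_slice {X : Type*} [MeasurableSpace X] {ν : Measure X} [SFinite μ]
    {f : X → α → F} (hp₀ : p ≠ 0) (hp : p ≠ ∞)
    (hf : AEStronglyMeasurable (Function.uncurry f) (ν.prod μ)) :
    AEMeasurable (fun s => eLpNorm (f s) p μ) ν := by
  simp_rw [eLpNorm_eq_lintegral_rpow_enorm_toReal hp₀ hp]
  exact (hf.enorm.pow_const p.toReal).lintegral_prod_right'.pow_const _

-- Hölder's inequality is applied to `J` and `H / J`, since `A` may fail to be measurable.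
theorem lintegral_le_Lp_mul_Lq_of_ae_le_mul {q q' : ℝ} (hqq' : q.HolderConjugate q')
    {H J A : α → ℝ≥0∞} (hH : AEMeasurable H μ) (hJ : AEMeasurable J μ)
    (hJfin : ∫⁻ s, J s ^ q ∂μ ≠ ∞) (hHAJ : ∀ᵐ s ∂μ, H s ≤ A s * J s) :
    ∫⁻ s, H s ∂μ ≤ (∫⁻ s, J s ^ q ∂μ) ^ (1 / q) * (∫⁻ s, A s ^ q' ∂μ) ^ (1 / q') := by
  have hJtop : ∀ᵐ s ∂μ, J s ≠ ∞ := by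
    filter_upwards [ae_lt_top' (hJ.pow_const q) hJfin] with s hs hJs
    simp [hJs, hqq'.pos] at hs
  calc ∫⁻ s, H s ∂μ ≤ ∫⁻ s, (J * fun s => H s / J s) s ∂μ := by
        refine lintegral_mono_ae ?_
        filter_upwards [hJtop, hHAJ] with s hs hHs
        rcases eq_or_ne (J s) 0 with h₀ | h₀
        · simpa [h₀] using hHs
        · exact (ENNReal.mul_div_cancel h₀ hs).ge
    _ ≤ (∫⁻ s, J s ^ q ∂μ) ^ (1 / q) * (∫⁻ s, (H s / J s) ^ q' ∂μ) ^ (1 / q') :=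
        ENNReal.lintegral_mul_le_Lp_mul_Lq _ hqq' hJ (hH.div hJ)
    _ ≤ _ := by
        have := hqq'.symm.nonneg
        gcongr _ * ?_ ^ _
        refine lintegral_mono_ae ?_
        filter_upwards [hHAJ] with s hHs
        gcongr
        exact ENNReal.div_le_of_le_mul hHs

end Hoelder

section CompactSupport

variable {X E F : Type*} [TopologicalSpace X] [TopologicalSpace E] [MeasurableSpace E]
  [OpensMeasurableSpace E] [NormedAddCommGroup F] {μ : Measure E} [IsFiniteMeasureOnCompacts μ]

theorem continuousOn_lpNorm_of_compact_support [SecondCountableTopologyEither E F] {f : X → E → F}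
    {S : Set X} {K : Set E} {p : ℝ≥0∞} (hp₀ : p ≠ 0) (hp : p ≠ ∞) (hK : IsCompact K)
    (hf : ContinuousOn (Function.uncurry f) (S ×ˢ univ))
    (hfK : ∀ s ∈ S, ∀ x ∉ K, f s x = 0) :
    ContinuousOn (fun s => lpNorm (f s) p μ) S := by
  have hq := ENNReal.toReal_pos hp₀ hp
  refine ContinuousOn.congr ?_ fun s hs =>
    lpNorm_eq_integral_norm_rpow_toReal hp₀ hp (continuous_slice hf hs).aestronglyMeasurable
  refine (continuousOn_integral_of_compact_support (f := fun s x => ‖f s x‖ ^ p.toReal) hK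
    (hf.norm.rpow_const fun _ _ => .inr hq.le) fun s x hs hx => ?_).rpow_const
      fun _ _ => .inr (by positivity)
  rw [hfK s hs x hx, norm_zero, Real.zero_rpow hq.ne']

variable {ψ : E → ℝ} {p : ℝ≥0∞}

theorem continuousOn_lpNorm_spatial_mul [SecondCountableTopology E] {f : X → E → ℝ} {S : Set X}
    (hp₀ : p ≠ 0) (hp : p ≠ ∞) (hψ : Continuous ψ) (hψc : HasCompactSupport ψ)
    (hf : ContinuousOn (Function.uncurry f) (S ×ˢ univ)) :
    ContinuousOn (fun s => lpNorm (fun x => ψ x * f s x) p μ) S :=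
  continuousOn_lpNorm_of_compact_support (f := fun s x => ψ x * f s x) hp₀ hp hψc
    ((hψ.comp continuous_snd).continuousOn.mul hf) fun s _ x hx => by
      rw [image_eq_zero_of_notMem_tsupport hx, zero_mul]

theorem memLp_mul_of_hasCompactSupport {f : E → ℝ} (hψ : Continuous ψ) (hψc : HasCompactSupport ψ)
    (hf : Continuous f) : MemLp (fun x => ψ x * f x) p μ :=
  (hψ.mul hf).memLp_of_hasCompactSupport hψc.mul_right

theorem ofReal_lpNorm_mul_le {f : E → ℝ} (hψ : Continuous ψ) (hψc : HasCompactSupport ψ)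
    (hψ₁ : ∀ x, |ψ x| ≤ 1) (hf : Continuous f) :
    .ofReal (lpNorm (fun x => ψ x * f x) p μ) ≤ eLpNorm f p μ := by
  rw [ofReal_lpNorm (memLp_mul_of_hasCompactSupport hψ hψc hf)]
  refine eLpNorm_mono fun x => ?_
  rw [norm_mul]
  exact mul_le_of_le_one_left (norm_nonneg _) (hψ₁ x)

end CompactSupport

/-! ### A Grönwall inequality for `q`-th powers -/

theorem rpow_sub_one_mul_add_mul_rpow_le {q y r κ : ℝ} (hq : 1 ≤ q) (hκ : 0 < κ) (hy : 0 ≤ y)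
    (hr : 0 ≤ r) :
    (y ^ (q - 1) * r + κ) * (y ^ q + κ) ^ (1 / q - 1) ≤ r + κ ^ (1 / q) := by
  have hq₀ : 0 < q := by linarith
  have hyq := Real.rpow_nonneg hy q
  have hpos : 0 < y ^ q + κ := by linarith
  have hrate : y ^ (q - 1) * (y ^ q + κ) ^ (1 / q - 1) ≤ 1 := by
    calc y ^ (q - 1) * (y ^ q + κ) ^ (1 / q - 1)
        = (y ^ q) ^ (1 - 1 / q) * (y ^ q + κ) ^ (1 / q - 1) := by
          rw [← Real.rpow_mul hy, mul_sub, mul_one, mul_one_div_cancel hq₀.ne']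
      _ ≤ (y ^ q + κ) ^ (1 - 1 / q) * (y ^ q + κ) ^ (1 / q - 1) := by
          gcongr
          · rw [sub_nonneg, div_le_one hq₀]; exact hq
          · linarith
      _ = 1 := by rw [← Real.rpow_add hpos, sub_add_sub_cancel, sub_self, Real.rpow_zero]
  have herror : κ * (y ^ q + κ) ^ (1 / q - 1) ≤ κ ^ (1 / q) := by
    calc κ * (y ^ q + κ) ^ (1 / q - 1) ≤ κ * κ ^ (1 / q - 1) :=
          mul_le_mul_of_nonneg_left (Real.rpow_le_rpow_of_nonpos hκ (by linarith)
            (by rw [sub_nonpos, div_le_one hq₀]; exact hq)) hκ.le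
      _ = κ ^ (1 / q) := by rw [mul_comm, ← Real.rpow_add_one hκ.ne', sub_add_cancel]
  nlinarith [mul_le_mul_of_nonneg_left hrate hr]

-- `N` may fail to be differentiable where it vanishes, so differentiate `(N ^ q + κ) ^ (1 / q)`:
-- the regularisation and the error in the hypothesis are both absorbed in `κ ^ (1 / q)`.
theorem le_add_integral_of_hasDerivAt_rpow_le {N g' ρ : ℝ → ℝ} {a t q κ : ℝ} (hat : a ≤ t)
    (hq : 1 ≤ q) (hκ : 0 < κ) (hN₀ : ∀ s ∈ Icc a t, 0 ≤ N s) (hρ₀ : ∀ s ∈ Ioo a t, 0 ≤ ρ s)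
    (hN : ContinuousOn N (Icc a t)) (hρ : IntegrableOn ρ (Icc a t))
    (hderiv : ∀ s ∈ Ioo a t, HasDerivAt (fun s => N s ^ q) (g' s) s)
    (hle : ∀ s ∈ Ioo a t, g' s ≤ q * (N s ^ (q - 1) * ρ s + κ)) :
    N t ≤ N a + (∫ s in a..t, ρ s) + (1 + (t - a)) * κ ^ (1 / q) := by
  have hq₀ : 0 < q := by linarith
  have hq₁ : 1 / q ≤ 1 := by rwa [div_le_one hq₀]
  have hNq s (hs : s ∈ Icc a t) : 0 ≤ N s ^ q := Real.rpow_nonneg (hN₀ s hs) q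
  have hpos s (hs : s ∈ Icc a t) : 0 < N s ^ q + κ := by linarith [hNq s hs]
  have hroot s (hs : s ∈ Icc a t) : (N s ^ q) ^ (1 / q) = N s := by
    rw [one_div, Real.rpow_rpow_inv (hN₀ s hs) hq₀.ne']
  have ha := left_mem_Icc.2 hat
  have ht := right_mem_Icc.2 hat
  have hgrowth : (N t ^ q + κ) ^ (1 / q) - (N a ^ q + κ) ^ (1 / q) ≤
      ∫ s in a..t, (ρ s + κ ^ (1 / q)) := by
    refine intervalIntegral.sub_le_integral_of_hasDeriv_right_of_le
      (g := fun s => (N s ^ q + κ) ^ (1 / q)) hat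
      (((hN.rpow_const fun _ _ => .inr hq₀.le).add continuousOn_const).rpow_const
        fun s hs => .inl (hpos s hs).ne')
      (fun s hs => (((hderiv s hs).add_const κ).rpow_const
        (.inl (hpos s (Ioo_subset_Icc_self hs)).ne')).hasDerivWithinAt)
      (hρ.add continuousOn_const.integrableOn_Icc) fun s hs => ?_
    have hs' := Ioo_subset_Icc_self hs
    calc g' s * (1 / q) * (N s ^ q + κ) ^ (1 / q - 1)
        ≤ q * (N s ^ (q - 1) * ρ s + κ) * (1 / q) * (N s ^ q + κ) ^ (1 / q - 1) := by
          have := Real.rpow_nonneg (hpos s hs').le (1 / q - 1)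
          gcongr
          exact hle s hs
      _ = (N s ^ (q - 1) * ρ s + κ) * (N s ^ q + κ) ^ (1 / q - 1) := by field_simp
      _ ≤ ρ s + κ ^ (1 / q) :=
          rpow_sub_one_mul_add_mul_rpow_le hq hκ (hN₀ s hs') (hρ₀ s hs)
  have hinit : (N a ^ q + κ) ^ (1 / q) ≤ N a + κ ^ (1 / q) := by
    simpa only [hroot a ha] using
      Real.rpow_add_le_add_rpow (hNq a ha) hκ.le (by positivity) hq₁
  have hfinal : N t ≤ (N t ^ q + κ) ^ (1 / q) := by
    conv_lhs => rw [← hroot t ht]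
    exact Real.rpow_le_rpow (hNq t ht) (by linarith) (by positivity)
  have hρi : IntervalIntegrable ρ volume a t :=
    (intervalIntegrable_iff_integrableOn_Icc_of_le hat).2 hρ
  rw [intervalIntegral.integral_add hρi intervalIntegrable_const,
    intervalIntegral.integral_const, smul_eq_mul] at hgrowth
  linarith

/-! ### Cutoff functions -/

theorem exists_cutoff_sequence {E : Type*} [NormedAddCommGroup E] [NormedSpace ℝ E]
    [FiniteDimensional ℝ E] :
    ∃ (ψ : ℕ → E → ℝ) (δ : ℕ → ℝ), (∀ n, ContDiff ℝ 1 (ψ n)) ∧ (∀ n, HasCompactSupport (ψ n)) ∧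
      (∀ n x, ψ n x ∈ Icc 0 1) ∧ (∀ n x, ‖fderiv ℝ (ψ n) x‖ ≤ δ n) ∧ (∀ n, 0 < δ n) ∧
      Tendsto δ atTop (𝓝 0) ∧ ∀ x, Tendsto (fun n => ψ n x) atTop (𝓝 1) := by
  let χ : ContDiffBump (0 : E) := ⟨1, 2, one_pos, one_lt_two⟩
  have hχ : ContDiff ℝ 1 χ := χ.contDiff
  obtain ⟨M, hM⟩ := (hχ.continuous_fderiv one_ne_zero).bounded_above_of_compact_support
    (χ.hasCompactSupport.fderiv ℝ)
  have hM₀ : 0 ≤ M := (norm_nonneg _).trans (hM 0)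
  let c (n : ℕ) : ℝ := 1 / ((n : ℝ) + 1)
  have hc n : 0 < c n := by positivity
  have hlim : Tendsto c atTop (𝓝 0) := tendsto_one_div_add_atTop_nhds_zero_nat
  refine ⟨fun n x => χ (c n • x), fun n => c n * (M + 1), fun n => hχ.comp (contDiff_const_smul _),
    fun n => χ.hasCompactSupport.comp_smul (hc n).ne', fun n x => ⟨χ.nonneg, χ.le_one⟩,
    fun n x => ?_, fun n => mul_pos (hc n) (by linarith), by simpa using hlim.mul_const (M + 1),
    fun x => ?_⟩
  · rw [fderiv_comp_smul, norm_smul, Real.norm_of_nonneg (hc n).le]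
    exact mul_le_mul_of_nonneg_left ((hM _).trans (by linarith)) (hc n).le
  · have h₀ : Tendsto (fun n => c n • x) atTop (𝓝 0) := by simpa using hlim.smul_const x
    have := (χ.continuous.tendsto 0).comp h₀
    rwa [χ.one_of_mem_closedBall (by simp [χ])] at this

/-! ### Transport along a divergence-free field -/

theorem abs_mul_abs_rpow_sub_two_mul {q : ℝ} (hq : 1 < q) (y : ℝ) :
    |(q * |y| ^ (q - 2) * y)| = q * |y| ^ (q - 1) := by
  have h : |y| ^ (q - 1) = |y| ^ (q - 2) * |y| := by
    rw [← Real.rpow_add_one' (abs_nonneg y) (by linarith)]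
    ring_nf
  rw [abs_mul, abs_of_nonneg (by positivity), h, mul_assoc]

theorem integral_abs_rpow_mul_abs_apply_le {α E : Type*} [MeasurableSpace α] {μ : Measure α}
    [NormedAddCommGroup E] [NormedSpace ℝ E] {r r' : ℝ≥0∞} [r.HolderConjugate r'] {q δ : ℝ}
    {w : α → ℝ} {v : α → E} {A : α → E →L[ℝ] ℝ} {C U : ℝ≥0∞} (hq : 1 ≤ q) (hδ : 0 ≤ δ)
    (hC : C ≠ ∞) (hU : U ≠ ∞) (hw : AEStronglyMeasurable w μ) (hv : AEStronglyMeasurable v μ)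
    (hwC : eLpNorm w ∞ μ ≤ C) (hwr : eLpNorm w r μ ≤ C) (hvU : eLpNorm v r' μ ≤ U)
    (hA : ∀ x, ‖A x‖ ≤ δ) :
    ∫ x, |w x| ^ q * |A x (v x)| ∂μ ≤ δ * (C ^ (q - 1) * (C * U)).toReal := by
  have hq' : 0 ≤ q - 1 := by linarith
  have hpoint x : ‖|w x| ^ q * |A x (v x)|‖ₑ ≤ .ofReal δ * (‖w x‖ₑ ^ q * ‖v x‖ₑ) := by
    rw [enorm_mul, Real.enorm_rpow_of_nonneg (abs_nonneg _) (by linarith), Real.enorm_abs,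
      Real.enorm_abs, mul_left_comm]
    gcongr
    calc ‖A x (v x)‖ₑ ≤ ‖A x‖ₑ * ‖v x‖ₑ := (A x).le_opENorm (v x)
      _ ≤ .ofReal δ * ‖v x‖ₑ := by
          gcongr
          exact (ofReal_norm (A x)).symm.trans_le (ENNReal.ofReal_le_ofReal (hA x))
  have hbound : ‖∫ x, |w x| ^ q * |A x (v x)| ∂μ‖ₑ ≤ .ofReal δ * (C ^ (q - 1) * (C * U)) :=
    calc ‖∫ x, |w x| ^ q * |A x (v x)| ∂μ‖ₑ ≤ ∫⁻ x, .ofReal δ * (‖w x‖ₑ ^ q * ‖v x‖ₑ) ∂μ :=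
          (enorm_integral_le_lintegral_enorm _).trans (lintegral_mono hpoint)
      _ = .ofReal δ * ∫⁻ x, ‖w x‖ₑ ^ q * ‖v x‖ₑ ∂μ :=
          lintegral_const_mul' _ _ ENNReal.ofReal_ne_top
      _ ≤ .ofReal δ * (eLpNorm w ∞ μ ^ (q - 1) * (eLpNorm w r μ * eLpNorm v r' μ)) := by
          gcongr
          exact lintegral_enorm_rpow_mul_enorm_le hq hw hv
      _ ≤ .ofReal δ * (C ^ (q - 1) * (C * U)) := by gcongr
  have hfin : C ^ (q - 1) * (C * U) ≠ ∞ :=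
    ENNReal.mul_ne_top (ENNReal.rpow_ne_top_of_nonneg hq' hC) (ENNReal.mul_ne_top hC hU)
  calc ∫ x, |w x| ^ q * |A x (v x)| ∂μ ≤ (.ofReal δ * (C ^ (q - 1) * (C * U)) : ℝ≥0∞).toReal := by
        refine (Real.le_norm_self _).trans ?_
        rw [← toReal_enorm]
        exact ENNReal.toReal_mono (ENNReal.mul_ne_top ENNReal.ofReal_ne_top hfin) hbound
    _ = δ * (C ^ (q - 1) * (C * U)).toReal := by rw [ENNReal.toReal_mul, ENNReal.toReal_ofReal hδ]

section Transport

variable {E : Type*} [NormedAddCommGroup E] [NormedSpace ℝ E] {I : Set ℝ} {u : ℝ → E → E}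
  {ω : ℝ → E → ℝ} {ψ : E → ℝ} {s : ℝ}

theorem contDiffOn_uncurry_spatial_mul (hω : ContDiffOn ℝ 1 (Function.uncurry ω) (I ×ˢ univ))
    (hψ : ContDiff ℝ 1 ψ) :
    ContDiffOn ℝ 1 (Function.uncurry fun s x => ψ x * ω s x) (I ×ˢ univ) :=
  (hψ.comp contDiff_snd).contDiffOn.mul hω

theorem materialDeriv_abs_rpow_spatial_mul (hI : UniqueDiffOn ℝ I)
    (hω : ContDiffOn ℝ 1 (Function.uncurry ω) (I ×ˢ univ)) (hψ : ContDiff ℝ 1 ψ) (hs : s ∈ I)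
    {q : ℝ} (hq : 1 < q) (x : E) :
    materialDeriv I u (fun s x => |ψ x * ω s x| ^ q) s x =
      q * |ψ x * ω s x| ^ (q - 2) * (ψ x * ω s x) *
        (ψ x * materialDeriv I u ω s x + ω s x * fderiv ℝ ψ x (u s x)) := by
  rw [materialDeriv_comp (ω := fun s x => ψ x * ω s x) hI (contDiffOn_uncurry_spatial_mul hω hψ) hs
      (hasDerivAt_abs_rpow _ hq),
    materialDeriv_spatial_mul hI hω hs (hψ.differentiable one_ne_zero x)]

theorem abs_materialDeriv_abs_rpow_spatial_mul_le (hI : UniqueDiffOn ℝ I)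
    (hω : ContDiffOn ℝ 1 (Function.uncurry ω) (I ×ˢ univ)) (hψ : ContDiff ℝ 1 ψ) (hs : s ∈ I)
    {q : ℝ} (hq : 1 < q) {x : E} (hψx : |ψ x| ≤ 1) :
    |materialDeriv I u (fun s x => |ψ x * ω s x| ^ q) s x| ≤
      q * (|ψ x * ω s x| ^ (q - 1) * |ψ x * materialDeriv I u ω s x| +
        |ω s x| ^ q * |fderiv ℝ ψ x (u s x)|) := by
  have hψω : |ψ x * ω s x| ≤ |ω s x| := by
    rw [abs_mul]
    exact mul_le_of_le_one_left (abs_nonneg _) hψx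
  have hpow : |ω s x| ^ q = |ω s x| ^ (q - 1) * |ω s x| := by
    rw [← Real.rpow_add_one' (abs_nonneg _) (by linarith), sub_add_cancel]
  calc |materialDeriv I u (fun s x => |ψ x * ω s x| ^ q) s x|
      ≤ q * |ψ x * ω s x| ^ (q - 1) *
          (|ψ x * materialDeriv I u ω s x| + |ω s x| * |fderiv ℝ ψ x (u s x)|) := by
        rw [materialDeriv_abs_rpow_spatial_mul hI hω hψ hs hq, abs_mul,
          abs_mul_abs_rpow_sub_two_mul hq, ← abs_mul (ω s x)]
        gcongr
        exact abs_add_le _ _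
    _ = q * (|ψ x * ω s x| ^ (q - 1) * |ψ x * materialDeriv I u ω s x| +
          |ψ x * ω s x| ^ (q - 1) * |ω s x| * |fderiv ℝ ψ x (u s x)|) := by ring
    _ ≤ _ := by
        rw [hpow]
        have : 0 ≤ q - 1 := by linarith
        gcongr

variable [MeasurableSpace E] {μ : Measure E} {p : ℝ≥0∞}

section Energy

variable [OpensMeasurableSpace E] [IsFiniteMeasureOnCompacts μ]

theorem integral_materialDeriv_abs_rpow_spatial_mul_le (hp₁ : 1 < p) (hp : p ≠ ∞)
    (hI : UniqueDiffOn ℝ I) (hu : ContinuousOn (Function.uncurry u) (I ×ˢ univ))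
    (hω : ContDiffOn ℝ 1 (Function.uncurry ω) (I ×ˢ univ)) (hψ : ContDiff ℝ 1 ψ)
    (hψc : HasCompactSupport ψ) (hψ₁ : ∀ x, |ψ x| ≤ 1) (hs : s ∈ I) :
    ∫ x, materialDeriv I u (fun s x => |ψ x * ω s x| ^ p.toReal) s x ∂μ ≤
      p.toReal * (lpNorm (fun x => ψ x * ω s x) p μ ^ (p.toReal - 1) *
          lpNorm (fun x => ψ x * materialDeriv I u ω s x) p μ +
        ∫ x, |ω s x| ^ p.toReal * |fderiv ℝ ψ x (u s x)| ∂μ) := by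
  have hq : 1 < p.toReal := by simpa using ENNReal.toReal_strict_mono hp hp₁
  have hωs : Continuous (ω s) := (contDiff_slice hω hs).continuous
  have hus : Continuous (u s) := continuous_slice hu hs
  have hDs : Continuous (materialDeriv I u ω s) :=
    continuous_slice (continuousOn_materialDeriv hI hu hω) hs
  have hψω := hψ.continuous.mul hωs
  have hψD := hψ.continuous.mul hDs
  have hsource : Integrable
      (fun x => |ψ x * ω s x| ^ (p.toReal - 1) * |ψ x * materialDeriv I u ω s x|) μ :=
    ((hψω.abs.rpow_const fun _ => .inr (by linarith)).mul
      hψD.abs).integrable_of_hasCompactSupport (hψc.mul_right.abs.mul_left)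
  have hflux : Integrable (fun x => |ω s x| ^ p.toReal * |fderiv ℝ ψ x (u s x)|) μ :=
    ((hωs.abs.rpow_const fun _ => .inr (by linarith)).mul ((hψ.continuous_fderiv
      one_ne_zero).clm_apply hus).abs).integrable_of_hasCompactSupport
      ((hψc.fderiv ℝ).mono' fun x hx => subset_tsupport _ fun h => hx (by simp [h]))
  calc ∫ x, materialDeriv I u (fun s x => |ψ x * ω s x| ^ p.toReal) s x ∂μ
      ≤ ∫ x, p.toReal * (|ψ x * ω s x| ^ (p.toReal - 1) * |ψ x * materialDeriv I u ω s x| +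
          |ω s x| ^ p.toReal * |fderiv ℝ ψ x (u s x)|) ∂μ :=
        (Real.le_norm_self _).trans (norm_integral_le_of_norm_le
          ((hsource.add hflux).const_mul _) (.of_forall fun x =>
            abs_materialDeriv_abs_rpow_spatial_mul_le hI hω hψ hs hq (hψ₁ x)))
    _ = p.toReal * (∫ x, |ψ x * ω s x| ^ (p.toReal - 1) * |ψ x * materialDeriv I u ω s x| ∂μ +
          ∫ x, |ω s x| ^ p.toReal * |fderiv ℝ ψ x (u s x)| ∂μ) := by
        rw [integral_const_mul, integral_add hsource hflux]
    _ ≤ _ := by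
        gcongr
        exact integral_norm_rpow_sub_one_mul_norm_le hp₁ hp
          (memLp_mul_of_hasCompactSupport hψ.continuous hψc hωs)
          (memLp_mul_of_hasCompactSupport hψ.continuous hψc hDs)

end Energy

variable [BorelSpace E] [FiniteDimensional ℝ E] [μ.IsAddHaarMeasure] {a t : ℝ}

theorem lpNorm_spatial_mul_le {κ : ℝ} (hp₁ : 1 < p) (hp : p ≠ ∞) (hI : UniqueDiffOn ℝ I)
    (hat : a ≤ t) (hIcc : Icc a t ⊆ I)
    (hu : ContinuousOn (Function.uncurry u) (I ×ˢ univ)) (hu₁ : ∀ s ∈ I, ContDiff ℝ 1 (u s))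
    (hdiv : ∀ s ∈ I, ∀ x, divergence (u s) x = 0)
    (hω : ContDiffOn ℝ 1 (Function.uncurry ω) (I ×ˢ univ)) (hψ : ContDiff ℝ 1 ψ)
    (hψc : HasCompactSupport ψ) (hψ₁ : ∀ x, |ψ x| ≤ 1) (hκ : 0 < κ)
    (hflux : ∀ s ∈ I, ∫ x, |ω s x| ^ p.toReal * |fderiv ℝ ψ x (u s x)| ∂μ ≤ κ) :
    lpNorm (fun x => ψ x * ω t x) p μ ≤ lpNorm (fun x => ψ x * ω a x) p μ +
      (∫ s in a..t, lpNorm (fun x => ψ x * materialDeriv I u ω s x) p μ) +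
        (1 + (t - a)) * κ ^ (1 / p.toReal) := by
  have hp₀ : p ≠ 0 := (zero_lt_one.trans hp₁).ne'
  have hq : 1 < p.toReal := by simpa using ENNReal.toReal_strict_mono hp hp₁
  have hψω := contDiffOn_uncurry_spatial_mul hω hψ
  have hnorm s (hs : s ∈ I) : lpNorm (fun x => ψ x * ω s x) p μ ^ p.toReal =
      ∫ x, |ψ x * ω s x| ^ p.toReal ∂μ :=
    lpNorm_rpow_toReal hp₀ hp (contDiff_slice hψω hs).continuous.aestronglyMeasurable
  have hderiv s (hs : s ∈ Ioo a t) :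
      HasDerivAt (fun s => lpNorm (fun x => ψ x * ω s x) p μ ^ p.toReal)
        (∫ x, materialDeriv I u (fun s x => |ψ x * ω s x| ^ p.toReal) s x ∂μ) s := by
    have hsI : I ∈ 𝓝 s := mem_of_superset (Icc_mem_nhds hs.1 hs.2) hIcc
    have hs' := mem_of_mem_nhds hsI
    refine (hasDerivAt_integral_materialDeriv (W := fun s x => |ψ x * ω s x| ^ p.toReal) hI hsI
      (hu₁ s hs') (hdiv s hs') ((contDiff_norm_rpow (E := ℝ) hq).comp_contDiffOn hψω) hψc
        fun τ _ x hx => ?_).congr_of_eventuallyEq (eventually_of_mem hsI hnorm)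
    simp [image_eq_zero_of_notMem_tsupport hx, Real.zero_rpow (zero_lt_one.trans hq).ne']
  refine le_add_integral_of_hasDerivAt_rpow_le hat hq.le hκ (fun _ _ => lpNorm_nonneg)
    (fun _ _ => lpNorm_nonneg)
    ((continuousOn_lpNorm_spatial_mul hp₀ hp hψ.continuous hψc hω.continuousOn).mono hIcc)
    ((continuousOn_lpNorm_spatial_mul hp₀ hp hψ.continuous hψc
      (continuousOn_materialDeriv hI hu hω)).mono hIcc).integrableOn_Icc hderiv fun s hs => ?_
  have hs' := hIcc (Ioo_subset_Icc_self hs)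
  refine (integral_materialDeriv_abs_rpow_spatial_mul_le hp₁ hp hI hu hω hψ hψc hψ₁ hs').trans ?_
  gcongr
  exact hflux s hs'

theorem eLpNorm_spatial_mul_le {κ : ℝ} (hp₁ : 1 < p) (hp : p ≠ ∞) (hI : UniqueDiffOn ℝ I)
    (hat : a ≤ t) (hIcc : Icc a t ⊆ I)
    (hu : ContinuousOn (Function.uncurry u) (I ×ˢ univ)) (hu₁ : ∀ s ∈ I, ContDiff ℝ 1 (u s))
    (hdiv : ∀ s ∈ I, ∀ x, divergence (u s) x = 0)
    (hω : ContDiffOn ℝ 1 (Function.uncurry ω) (I ×ˢ univ)) (hψ : ContDiff ℝ 1 ψ)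
    (hψc : HasCompactSupport ψ) (hψ₁ : ∀ x, |ψ x| ≤ 1) (hκ : 0 < κ)
    (hflux : ∀ s ∈ I, ∫ x, |ω s x| ^ p.toReal * |fderiv ℝ ψ x (u s x)| ∂μ ≤ κ) :
    eLpNorm (fun x => ψ x * ω t x) p μ ≤ eLpNorm (ω a) p μ +
      (∫⁻ s in Ico a t, eLpNorm (materialDeriv I u ω s) p μ) +
        .ofReal ((1 + (t - a)) * κ ^ (1 / p.toReal)) := by
  have hD := continuousOn_materialDeriv hI hu hω
  have hcont := (continuousOn_lpNorm_spatial_mul (μ := μ) (zero_lt_one.trans hp₁).ne' hp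
    hψ.continuous hψc hD).mono hIcc
  have hintegral : ENNReal.ofReal (∫ s in a..t, lpNorm (fun x => ψ x * materialDeriv I u ω s x) p μ)
      ≤ ∫⁻ s in Ico a t, eLpNorm (materialDeriv I u ω s) p μ := by
    rw [intervalIntegral.integral_of_le hat, ← integral_Ico_eq_integral_Ioc,
      ofReal_integral_eq_lintegral_ofReal (hcont.integrableOn_Icc.mono_set Ico_subset_Icc_self)
        (.of_forall fun _ => lpNorm_nonneg)]
    exact setLIntegral_mono' measurableSet_Ico fun s hs =>
      ofReal_lpNorm_mul_le hψ.continuous hψc hψ₁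
        (continuous_slice hD (hIcc (Ico_subset_Icc_self hs)))
  rw [← ofReal_lpNorm (memLp_mul_of_hasCompactSupport hψ.continuous hψc
    (continuous_slice hω.continuousOn (hIcc (right_mem_Icc.2 hat))))]
  refine (ENNReal.ofReal_le_ofReal (lpNorm_spatial_mul_le hp₁ hp hI hat hIcc hu hu₁ hdiv hω hψ hψc
    hψ₁ hκ hflux)).trans (ENNReal.ofReal_add_le.trans ?_)
  gcongr
  refine ENNReal.ofReal_add_le.trans ?_
  gcongr
  exact ofReal_lpNorm_mul_le hψ.continuous hψc hψ₁
    (continuous_slice hω.continuousOn (hIcc (left_mem_Icc.2 hat)))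

theorem eLpNorm_le_eLpNorm_add_lintegral_materialDeriv {r r' C U : ℝ≥0∞} [r.HolderConjugate r']
    (hp₁ : 1 < p) (hp : p ≠ ∞) (hI : UniqueDiffOn ℝ I) (hat : a ≤ t) (hIcc : Icc a t ⊆ I)
    (hu : ContinuousOn (Function.uncurry u) (I ×ˢ univ)) (hu₁ : ∀ s ∈ I, ContDiff ℝ 1 (u s))
    (hdiv : ∀ s ∈ I, ∀ x, divergence (u s) x = 0)
    (hω : ContDiffOn ℝ 1 (Function.uncurry ω) (I ×ˢ univ)) (hC : C ≠ ∞) (hU : U ≠ ∞)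
    (hωC : ∀ s ∈ I, eLpNorm (ω s) ∞ μ ≤ C) (hωr : ∀ s ∈ I, eLpNorm (ω s) r μ ≤ C)
    (huU : ∀ s ∈ I, eLpNorm (u s) r' μ ≤ U) :
    eLpNorm (ω t) p μ ≤
      eLpNorm (ω a) p μ + ∫⁻ s in Ico a t, eLpNorm (materialDeriv I u ω s) p μ := by
  have hq : 1 < p.toReal := by simpa using ENNReal.toReal_strict_mono hp hp₁
  obtain ⟨ψ, δ, hψ, hψc, hψ₁, hψδ, hδ, hδ₀, hψlim⟩ := exists_cutoff_sequence (E := E)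
  let M : ℝ := (C ^ (p.toReal - 1) * (C * U)).toReal
  have : 0 ≤ M := ENNReal.toReal_nonneg
  have hωt := (contDiff_slice hω (hIcc (right_mem_Icc.2 hat))).continuous
  have hbound n : eLpNorm (fun x => ψ n x * ω t x) p μ ≤ eLpNorm (ω a) p μ +
      (∫⁻ s in Ico a t, eLpNorm (materialDeriv I u ω s) p μ) +
        .ofReal ((1 + (t - a)) * (δ n * (M + 1)) ^ (1 / p.toReal)) := by
    have := hδ n
    refine eLpNorm_spatial_mul_le hp₁ hp hI hat hIcc hu hu₁ hdiv hω (hψ n) (hψc n)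
      (fun x => abs_le.2 ⟨by linarith [(hψ₁ n x).1], (hψ₁ n x).2⟩) (by positivity) fun s hs => ?_
    calc ∫ x, |ω s x| ^ p.toReal * |fderiv ℝ (ψ n) x (u s x)| ∂μ ≤ δ n * M :=
          integral_abs_rpow_mul_abs_apply_le hq.le (hδ n).le hC hU
            (contDiff_slice hω hs).continuous.aestronglyMeasurable
            (hu₁ s hs).continuous.aestronglyMeasurable (hωC s hs) (hωr s hs) (huU s hs) (hψδ n)
      _ ≤ δ n * (M + 1) := by
          gcongr
          linarith
  have herror : Tendsto (fun n => ENNReal.ofReal ((1 + (t - a)) * (δ n * (M + 1)) ^ (1 / p.toReal)))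
      atTop (𝓝 0) := by
    have h := ((hδ₀.mul_const (M + 1)).rpow_const (p := 1 / p.toReal)
      (.inr (by positivity))).const_mul (1 + (t - a))
    rw [zero_mul, Real.zero_rpow (one_div_pos.2 (zero_lt_one.trans hq)).ne', mul_zero] at h
    simpa using ENNReal.tendsto_ofReal h
  calc eLpNorm (ω t) p μ ≤ liminf (fun n => eLpNorm (fun x => ψ n x * ω t x) p μ) atTop :=
        Lp.eLpNorm_lim_le_liminf_eLpNorm
          (fun n => ((hψ n).continuous.mul hωt).aestronglyMeasurable) _
          (.of_forall fun x => by simpa using (hψlim x).mul_const (ω t x))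
    _ ≤ liminf (fun n => eLpNorm (ω a) p μ +
          (∫⁻ s in Ico a t, eLpNorm (materialDeriv I u ω s) p μ) +
            .ofReal ((1 + (t - a)) * (δ n * (M + 1)) ^ (1 / p.toReal))) atTop :=
        liminf_le_liminf (.of_forall hbound)
    _ = _ := by simpa using (herror.const_add _).liminf_eq

end Transport

/-! ### The forced transport equation -/

theorem setLIntegral_le_timeL2_mul_timeL2 {t : ℝ} {H J A : ℝ → ℝ≥0∞}
    (hH : AEMeasurable H (volume.restrict (Ico 0 t)))
    (hJ : AEMeasurable J (volume.restrict (Ico 0 t))) (hJfin : timeL2 t J < ⊤)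
    (hHAJ : ∀ᵐ s ∂volume.restrict (Ico 0 t), H s ≤ A s * J s) :
    ∫⁻ s in Ico 0 t, H s ≤ timeL2 t J * timeL2 t A :=
  lintegral_le_Lp_mul_Lq_of_ae_le_mul .two_two hH hJ
    (fun h => by rw [timeL2, h] at hJfin; simp at hJfin) hHAJ

section Forced

variable {E F : Type*} [NormedAddCommGroup E] [NormedSpace ℝ E] [FiniteDimensional ℝ E]
  [MeasurableSpace E] [BorelSpace E] [NormedAddCommGroup F] [NormedSpace ℝ F] {μ : Measure E}
  [μ.IsAddHaarMeasure]

theorem lintegral_eLpNorm_materialDeriv_le {T t : ℝ} {p : ℝ≥0∞} (hp₀ : p ≠ 0) (hp : p ≠ ∞)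
    {u : ℝ → E → E} {ω : ℝ → E → ℝ} {j : ℝ → E → F} {β : ℝ → E → F →L[ℝ] ℝ}
    (hu : ContinuousOn (Function.uncurry u) (Ico 0 T ×ˢ univ))
    (hω : ContDiffOn ℝ 1 (Function.uncurry ω) (Ico 0 T ×ˢ univ))
    (hj : AEStronglyMeasurable (Function.uncurry j) ((volume.restrict (Ico 0 T)).prod μ))
    (hjfin : timeL2 t (fun s => eLpNorm (j s) p μ) < ⊤)
    (heq : ∀ s ∈ Ico 0 T, ∀ x, materialDeriv (Ico 0 T) u ω s x = -β s x (j s x)) (ht : t ≤ T) :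
    ∫⁻ s in Ico 0 t, eLpNorm (materialDeriv (Ico 0 T) u ω s) p μ ≤
      timeL2 t (fun s => eLpNorm (j s) p μ) * timeL2 t (fun s => eLpNorm (β s) ∞ μ) := by
  have hIco : Ico 0 t ⊆ Ico 0 T := Ico_subset_Ico_right ht
  have hjt := hj.mono_measure (Measure.prod_mono (Measure.restrict_mono hIco le_rfl) le_rfl)
  have hD : AEStronglyMeasurable (Function.uncurry (materialDeriv (Ico 0 T) u ω))
      ((volume.restrict (Ico 0 t)).prod μ) := by
    rw [← Measure.restrict_univ (μ := μ), Measure.prod_restrict]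
    exact ((continuousOn_materialDeriv (uniqueDiffOn_Ico 0 T) hu hω).mono
      (prod_mono hIco subset_rfl)).aestronglyMeasurable (measurableSet_Ico.prod .univ)
  refine setLIntegral_le_timeL2_mul_timeL2 (aemeasurable_eLpNorm_slice hp₀ hp hD)
    (aemeasurable_eLpNorm_slice hp₀ hp hjt) hjfin ?_
  filter_upwards [hjt.prodMk_left, ae_restrict_mem measurableSet_Ico] with s hjs hs
  rw [show materialDeriv (Ico 0 T) u ω s = fun x => -β s x (j s x) from funext (heq s (hIco hs))]
  simpa using eLpNorm_le_eLpNorm_top_mul_eLpNorm p (β s) hjs (fun L y => -L y) 1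
    (.of_forall fun x => by simpa using (β s x).le_opNNNorm (j s x))

theorem transport_vorticity_Lp_estimate_general {T t : ℝ} {p r r' : ℝ≥0∞} [r.HolderConjugate r']
    (hp₁ : 1 < p) (hp : p ≠ ∞) {u : ℝ → E → E} {ω : ℝ → E → ℝ} {j : ℝ → E → F}
    {β : ℝ → E → F →L[ℝ] ℝ} (hu : ContinuousOn (Function.uncurry u) (Ico 0 T ×ˢ univ))
    (hu₁ : ∀ s ∈ Ico 0 T, ContDiff ℝ 1 (u s)) (hdiv : ∀ s ∈ Ico 0 T, ∀ x, divergence (u s) x = 0)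
    (hubdd : (⨆ s : Ico 0 T, eLpNorm (u s) r' μ) < ⊤)
    (hω : ContDiffOn ℝ 1 (Function.uncurry ω) (Ico 0 T ×ˢ univ))
    (hωbdd : (⨆ s : Ico 0 T, (eLpNorm (ω s) r μ + eLpNorm (ω s) ∞ μ)) < ⊤)
    (hj : AEStronglyMeasurable (Function.uncurry j) ((volume.restrict (Ico 0 T)).prod μ))
    (hjfin : timeL2 t (fun s => eLpNorm (j s) p μ) < ⊤)
    (heq : ∀ s ∈ Ico 0 T, ∀ x, materialDeriv (Ico 0 T) u ω s x = -β s x (j s x))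
    (ht : t ∈ Ico 0 T) :
    eLpNorm (ω t) p μ ≤ eLpNorm (ω 0) p μ +
      timeL2 t (fun s => eLpNorm (j s) p μ) * timeL2 t (fun s => eLpNorm (β s) ∞ μ) := by
  have hωle s (hs : s ∈ Ico 0 T) := le_iSup
    (fun s : Ico 0 T => eLpNorm (ω s) r μ + eLpNorm (ω s) ∞ μ) ⟨s, hs⟩
  refine (eLpNorm_le_eLpNorm_add_lintegral_materialDeriv (r := r) (r' := r') hp₁ hp
    (uniqueDiffOn_Ico 0 T) ht.1 (Icc_subset_Ico_right ht.2) hu hu₁ hdiv hω hωbdd.ne hubdd.ne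
    (fun s hs => le_add_self.trans (hωle s hs)) (fun s hs => le_self_add.trans (hωle s hs))
    fun s hs => le_iSup (fun s : Ico 0 T => eLpNorm (u s) r' μ) ⟨s, hs⟩).trans ?_
  gcongr
  exact lintegral_eLpNorm_materialDeriv_le (zero_lt_one.trans hp₁).ne' hp hu hω hj hjfin heq ht.2.le

end Forced

/-- **A priori `L^p` vorticity estimate for the forced transport equation**
`∂ₜω + u·∇ω = −j·∇b` on `[0,T) × ℝ²`, with `u` continuously differentiable and
divergence-free, bounded in `L²` uniformly in time, `ω` continuously differentiable and
bounded in `L² ∩ L^∞` uniformly in time, `j`, `b` measurable with `b` differentiable in `x`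
and the mixed norms of `j` and `∇b` finite.  Then for `2 ≤ p < ∞` and every `t ∈ (0,T)`:
`‖ω(t)‖_{L^p} ≤ ‖ω(0)‖_{L^p} + ‖j‖_{L²([0,t);L^p)} ‖∇b‖_{L²([0,t);L^∞)}`. -/
theorem transport_vorticity_Lp_estimate
    (T : ℝ) (hT : 0 < T) (p : ℝ≥0∞) (hp2 : 2 ≤ p) (hpfin : p ≠ ∞)
    (u : ℝ → EuclideanSpace ℝ (Fin 2) → EuclideanSpace ℝ (Fin 2))
    (ω : ℝ → EuclideanSpace ℝ (Fin 2) → ℝ)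
    (j : ℝ → EuclideanSpace ℝ (Fin 2) → EuclideanSpace ℝ (Fin 2))
    (b : ℝ → EuclideanSpace ℝ (Fin 2) → ℝ)
    (hu : ContDiffOn ℝ 1 (Function.uncurry u) (Ico 0 T ×ˢ univ))
    (hdiv : ∀ t ∈ Ico (0:ℝ) T, ∀ x,
      fderiv ℝ (fun y => u t y 0) x (EuclideanSpace.single 0 1) +
        fderiv ℝ (fun y => u t y 1) x (EuclideanSpace.single 1 1) = 0)
    (huL2 : (⨆ t : Ico (0:ℝ) T, eLpNorm (u t.1) 2 volume) < ⊤)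
    (hω : ContDiffOn ℝ 1 (Function.uncurry ω) (Ico 0 T ×ˢ univ))
    (hωbdd : (⨆ t : Ico (0:ℝ) T,
        (eLpNorm (ω t.1) 2 volume + eLpNorm (ω t.1) ∞ volume)) < ⊤)
    (hj : AEStronglyMeasurable (Function.uncurry j)
      ((volume.restrict (Ico 0 T)).prod volume))
    (hbmeas : AEStronglyMeasurable (Function.uncurry b)
      ((volume.restrict (Ico 0 T)).prod volume))
    (hb : ∀ t ∈ Ico (0:ℝ) T, Differentiable ℝ (b t))
    (hjfin : ∀ t ∈ Ico (0:ℝ) T, timeL2 t (fun s => eLpNorm (j s) p volume) < ⊤)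
    (hbfin : ∀ t ∈ Ico (0:ℝ) T,
      timeL2 t (fun s => eLpNorm (fun x => fderiv ℝ (b s) x) ∞ volume) < ⊤)
    (heq : ∀ t ∈ Ico (0:ℝ) T, ∀ x,
      fderivWithin ℝ (Function.uncurry ω) (Ico 0 T ×ˢ univ) (t, x) (1, 0)
        + fderiv ℝ (ω t) x (u t x) = -(fderiv ℝ (b t) x (j t x))) :
    ∀ t ∈ Ioo (0:ℝ) T,
      eLpNorm (ω t) p volume
        ≤ eLpNorm (ω 0) p volume +
            timeL2 t (fun s => eLpNorm (j s) p volume) *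
              timeL2 t (fun s => eLpNorm (fun x => fderiv ℝ (b s) x) ∞ volume) := fun t ht =>
  transport_vorticity_Lp_estimate_general (r := 2) (r' := 2) (ENNReal.one_lt_two.trans_le hp2) hpfin
    hu.continuousOn (fun s hs => contDiff_slice hu hs)
    (fun s hs x => by
      simpa [divergence_euclideanSpace ((contDiff_slice hu hs).differentiable one_ne_zero x)]
        using hdiv s hs x)
    huL2 hω hωbdd hj (hjfin t (Ioo_subset_Ico_self ht))
    (fun s hs x => (materialDeriv_eq_add hω hs x).trans (heq s hs x)) (Ioo_subset_Ico_self ht)
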